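/- arXiv:1611.06560 — 2 statements merged into one kernel-verified Lean document; each statement's English description precedes it below -/
import Mathlib

section
/- For every z in the disk |z| < δ_A/‖B‖, where A ∈ V_{[a,b]}(X) and B is a nonzero bounded linear operator on X, the operator-valued function z ↦ f(A + z·B) is differentiable (in operator norm) and its derivative is d/dz f(A + z·B) = ∫_a^b R(t, A + z·B)·B·R(t, A + z·B)·t dτ(t). -/
open MeasureTheory Set Filter

/-- A bounded operator `A` belongs to `V_{[a,b]}(X)` if `[a,b]` lies in its resolvent set. -/
def MemVab {X : Type*} [NormedAddCommGroup X] [NormedSpace ℂ X]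
    (a b : ℝ) (A : X →L[ℂ] X) : Prop :=
  ∀ t ∈ Icc a b, (t : ℂ) ∈ resolventSet ℂ A

/-- `m_A = max_{t ∈ [a,b]} ‖R(t,A)‖`. -/
noncomputable def mConst {X : Type*} [NormedAddCommGroup X] [NormedSpace ℂ X]
    (a b : ℝ) (A : X →L[ℂ] X) : ℝ :=
  sSup ((fun t : ℝ => ‖resolvent A (t : ℂ)‖) '' Icc a b)

/-- For `f ∈ ZR[a,b]` with representing measure `τ`, the operator
`f(A) = ∫_a^b A·R(t,A) dτ(t)` (a Bochner integral in operator norm). -/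
noncomputable def fOp {X : Type*} [NormedAddCommGroup X] [NormedSpace ℂ X] [CompleteSpace X]
    (τ : Measure ℝ) (a b : ℝ) (A : X →L[ℂ] X) : X →L[ℂ] X :=
  ∫ t in Icc a b, A * resolvent A (t : ℂ) ∂τ

/-- The transformer `f^∇_A(B) = ∫_a^b R(t,A)·B·R(t,A)·t dτ(t)`. -/
noncomputable def fDer {X : Type*} [NormedAddCommGroup X] [NormedSpace ℂ X] [CompleteSpace X]
    (τ : Measure ℝ) (a b : ℝ) (A B : X →L[ℂ] X) : X →L[ℂ] X :=
  ∫ t in Icc a b, t • (resolvent A (t : ℂ) * B * resolvent A (t : ℂ)) ∂τ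

/-!
On the resolvent set `A R(t,A) = t R(t,A) - 1`, so the Fréchet derivative of `A ↦ A R(t,A)` is `t`
times that of the resolvent, namely `H ↦ t R(t,A) H R(t,A)`. This is jointly continuous in `(A, t)`,
hence bounded for `t` in a compact set and `A` near a given operator, so one may differentiate under
the integral sign. By the Neumann series, `|z| < δ_A / ‖B‖` keeps `[a,b]` inside `ρ(A + zB)`.
-/

open scoped Topology

section ParametricIntegral

variable {𝕜 H E T : Type*} [RCLike 𝕜] [NormedAddCommGroup H] [NormedSpace 𝕜 H]
  [NormedAddCommGroup E] [NormedSpace ℝ E] [NormedSpace 𝕜 E]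
  [TopologicalSpace T]

theorem exists_eventually_forall_norm_le_of_isCompact {V W : Type*} [TopologicalSpace V]
    [SeminormedAddCommGroup W] {K : Set T} (hK : IsCompact K) {g : V × T → W} {x₀ : V}
    (hg : ∀ t ∈ K, ContinuousAt g (x₀, t)) :
    ∃ C, ∀ᶠ x in 𝓝 x₀, ∀ t ∈ K, ‖g (x, t)‖ ≤ C := by
  have hslice : ContinuousOn (fun t ↦ g (x₀, t)) K := fun t ht ↦
    ((hg t ht).comp (f := fun s ↦ (x₀, s)) (by fun_prop)).continuousWithinAt
  obtain ⟨C, hC⟩ := hK.exists_bound_of_continuousOn hslice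
  refine ⟨C + 1, hK.eventually_forall_of_forall_eventually fun t ht ↦ ?_⟩
  have hlt : ‖g (x₀, t)‖ < C + 1 := (hC t ht).trans_lt (lt_add_one C)
  exact ((hg t ht).norm.eventually_lt_const hlt).mono fun _ h ↦ h.le

theorem hasFDerivAt_setIntegral_of_isCompact [T2Space T] [MeasurableSpace T]
    [OpensMeasurableSpace T] {μ : Measure T} [IsFiniteMeasureOnCompacts μ] {K : Set T}
    (hK : IsCompact K) {F : H → T → E} {F' : H → T → H →L[𝕜] E} {x₀ : H}
    (hF : ∀ᶠ x in 𝓝 x₀, ContinuousOn (F x) K)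
    (hF' : ∀ t ∈ K, ContinuousAt (fun p : H × T ↦ F' p.1 p.2) (x₀, t))
    (hderiv : ∀ᶠ x in 𝓝 x₀, ∀ t ∈ K, HasFDerivAt (F · t) (F' x t) x) :
    HasFDerivAt (fun x ↦ ∫ t in K, F x t ∂μ) (∫ t in K, F' x₀ t ∂μ) x₀ := by
  have hF'_slice : ContinuousOn (F' x₀) K := fun t ht ↦
    ((hF' t ht).comp (f := fun s ↦ (x₀, s)) (by fun_prop)).continuousWithinAt
  obtain ⟨C, hC⟩ := exists_eventually_forall_norm_le_of_isCompact hK hF'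
  refine hasFDerivAt_integral_of_dominated_of_fderiv_le (bound := fun _ ↦ C) (hC.and hderiv)
    (hF.mono fun x hx ↦ hx.aestronglyMeasurable_of_isCompact hK hK.measurableSet)
    (hF.self_of_nhds.integrableOn_compact hK)
    (hF'_slice.aestronglyMeasurable_of_isCompact hK hK.measurableSet)
    ?_ (integrableOn_const hK.measure_ne_top) ?_
  · filter_upwards [ae_restrict_mem hK.measurableSet] with t ht x hx using hx.1 t ht
  · filter_upwards [ae_restrict_mem hK.measurableSet] with t ht x hx using hx.2 t ht

end ParametricIntegral

section Resolvent

variable {𝕜 𝔸 : Type*}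

theorem mul_resolvent_eq_smul_resolvent_sub_one [CommRing 𝕜] [Ring 𝔸] [Algebra 𝕜 𝔸]
    {A : 𝔸} {k : 𝕜} (hk : k ∈ resolventSet 𝕜 A) : A * resolvent A k = k • resolvent A k - 1 := by
  have hinv : (algebraMap 𝕜 𝔸 k - A) * resolvent A k = 1 := Ring.mul_inverse_cancel _ hk
  rw [← hinv, sub_mul, Algebra.smul_def, sub_sub_cancel]

theorem mem_resolventSet_add_of_norm_resolvent_mul_norm_lt_one [CommRing 𝕜] [NormedRing 𝔸]
    [Algebra 𝕜 𝔸] [CompleteSpace 𝔸] {A E : 𝔸} {k : 𝕜}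
    (hk : k ∈ resolventSet 𝕜 A) (hE : ‖resolvent A k‖ * ‖E‖ < 1) :
    k ∈ resolventSet 𝕜 (A + E) := by
  have hfactor : algebraMap 𝕜 𝔸 k - (A + E) =
      (algebraMap 𝕜 𝔸 k - A) * (1 - resolvent A k * E) := by
    rw [mul_sub, mul_one, ← mul_assoc, resolvent, Ring.mul_inverse_cancel _ hk, one_mul, sub_sub]
  rw [spectrum.mem_resolventSet_iff, hfactor]
  exact hk.mul (isUnit_one_sub_of_norm_lt_one ((norm_mul_le _ _).trans_lt hE))

end Resolvent

section ResolventContinuity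

variable {𝕜 𝔸 : Type*} [NormedField 𝕜] [NormedRing 𝔸] [NormedAlgebra 𝕜 𝔸] [CompleteSpace 𝔸]

theorem isOpen_setOf_mem_resolventSet : IsOpen {p : 𝔸 × 𝕜 | p.2 ∈ resolventSet 𝕜 p.1} :=
  Units.isOpen.preimage (f := fun p : 𝔸 × 𝕜 ↦ algebraMap 𝕜 𝔸 p.2 - p.1)
    (((continuous_algebraMap 𝕜 𝔸).comp continuous_snd).sub continuous_fst)

theorem continuousAt_resolvent_prod {A : 𝔸} {k : 𝕜} (hk : k ∈ resolventSet 𝕜 A) :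
    ContinuousAt (fun p : 𝔸 × 𝕜 ↦ resolvent p.1 p.2) (A, k) := by
  have hinverse : ContinuousAt Ring.inverse (algebraMap 𝕜 𝔸 k - A) :=
    NormedRing.inverse_continuousAt hk.unit
  exact hinverse.comp (f := fun p : 𝔸 × 𝕜 ↦ algebraMap 𝕜 𝔸 p.2 - p.1) (x := (A, k))
    (((continuous_algebraMap 𝕜 𝔸).comp continuous_snd).sub continuous_fst).continuousAt

variable {T : Type*} [TopologicalSpace T] {γ : T → 𝕜} {K : Set T} {A : 𝔸}

theorem continuousOn_resolvent_comp (hγ : Continuous γ) (hA : ∀ t ∈ K, γ t ∈ resolventSet 𝕜 A) :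
    ContinuousOn (fun t ↦ resolvent A (γ t)) K := fun t ht ↦
  ((continuousAt_resolvent_prod (hA t ht)).comp (f := fun s ↦ (A, γ s))
    (by fun_prop)).continuousWithinAt

theorem eventually_forall_mem_resolventSet (hK : IsCompact K) (hγ : Continuous γ)
    (hA : ∀ t ∈ K, γ t ∈ resolventSet 𝕜 A) :
    ∀ᶠ A' in 𝓝 A, ∀ t ∈ K, γ t ∈ resolventSet 𝕜 A' :=
  hK.eventually_forall_of_forall_eventually fun t ht ↦
    (isOpen_setOf_mem_resolventSet.preimage (continuous_id.prodMap hγ)).mem_nhds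
      (x := (A, t)) (hA t ht)

end ResolventContinuity

section ResolventDerivative

variable {𝕜 𝔸 : Type*} [NontriviallyNormedField 𝕜] [NormedRing 𝔸] [NormedAlgebra 𝕜 𝔸]
  [CompleteSpace 𝔸]

theorem hasFDerivAt_mul_resolvent {A : 𝔸} {k : 𝕜} (hk : k ∈ resolventSet 𝕜 A) :
    HasFDerivAt (fun A : 𝔸 ↦ A * resolvent A k)
      (k • ContinuousLinearMap.mulLeftRight 𝕜 𝔸 (resolvent A k) (resolvent A k)) A := by
  have hmem : ∀ᶠ A' in 𝓝 A, k ∈ resolventSet 𝕜 A' :=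
    (isOpen_setOf_mem_resolventSet.preimage (Continuous.prodMk_left k)).mem_nhds hk
  exact (((spectrum.hasFDerivAt_resolvent hk).const_smul k).sub_const 1).congr_of_eventuallyEq
    (hmem.mono fun _ ↦ mul_resolvent_eq_smul_resolvent_sub_one)

theorem continuousAt_smul_mulLeftRight_resolvent {T : Type*} [TopologicalSpace T]
    {γ : T → 𝕜} (hγ : Continuous γ) {A : 𝔸} {t : T} (ht : γ t ∈ resolventSet 𝕜 A) :
    ContinuousAt (fun p : 𝔸 × T ↦ γ p.2 •
      ContinuousLinearMap.mulLeftRight 𝕜 𝔸 (resolvent p.1 (γ p.2)) (resolvent p.1 (γ p.2)))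
      (A, t) := by
  have hR : ContinuousAt (fun p : 𝔸 × T ↦ resolvent p.1 (γ p.2)) (A, t) :=
    (continuousAt_resolvent_prod ht).comp (f := Prod.map id γ) (x := (A, t))
      (continuous_id.prodMap hγ).continuousAt
  fun_prop

end ResolventDerivative

section IntegralOfResolvents

variable {𝕜 𝔸 T : Type*} [RCLike 𝕜] [NormedRing 𝔸] [NormedAlgebra 𝕜 𝔸] [NormedSpace ℝ 𝔸]
  [CompleteSpace 𝔸] [TopologicalSpace T] [T2Space T] [MeasurableSpace T] [OpensMeasurableSpace T]
  {μ : Measure T} [IsFiniteMeasureOnCompacts μ] {K : Set T} {γ : T → 𝕜}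

theorem hasFDerivAt_setIntegral_mul_resolvent (hK : IsCompact K) (hγ : Continuous γ) {A : 𝔸}
    (hA : ∀ t ∈ K, γ t ∈ resolventSet 𝕜 A) :
    HasFDerivAt (fun A : 𝔸 ↦ ∫ t in K, A * resolvent A (γ t) ∂μ)
      (∫ t in K, γ t •
        ContinuousLinearMap.mulLeftRight 𝕜 𝔸 (resolvent A (γ t)) (resolvent A (γ t)) ∂μ) A := by
  have hmem := eventually_forall_mem_resolventSet hK hγ hA
  exact hasFDerivAt_setIntegral_of_isCompact hK
    (hmem.mono fun A' hA' ↦ continuousOn_const.mul (continuousOn_resolvent_comp hγ hA'))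
    (fun t ht ↦ continuousAt_smul_mulLeftRight_resolvent hγ (hA t ht))
    (hmem.mono fun A' hA' t ht ↦ hasFDerivAt_mul_resolvent (hA' t ht))

theorem fOp_hasDerivAt_general (hK : IsCompact K) (hγ : Continuous γ) {A B : 𝔸} {z : 𝕜}
    (hz : ∀ t ∈ K, γ t ∈ resolventSet 𝕜 (A + z • B)) :
    HasDerivAt (fun w : 𝕜 ↦ ∫ t in K, (A + w • B) * resolvent (A + w • B) (γ t) ∂μ)
      (∫ t in K, γ t • (resolvent (A + z • B) (γ t) * B * resolvent (A + z • B) (γ t)) ∂μ) z := by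
  have hline : HasDerivAt (fun w : 𝕜 ↦ A + w • B) B z := by
    simpa only [id, one_smul] using ((hasDerivAt_id z).smul_const B).const_add A
  have hR := continuousOn_resolvent_comp hγ hz
  have hint : IntegrableOn (fun t ↦ γ t • ContinuousLinearMap.mulLeftRight 𝕜 𝔸
      (resolvent (A + z • B) (γ t)) (resolvent (A + z • B) (γ t))) K μ :=
    ContinuousOn.integrableOn_compact hK (by fun_prop)
  have hcomp := (hasFDerivAt_setIntegral_mul_resolvent (μ := μ) hK hγ hz).comp_hasDerivAt z hline
  rwa [ContinuousLinearMap.integral_apply hint] at hcomp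

end IntegralOfResolvents

section Operators

variable {X : Type*} [NormedAddCommGroup X] [NormedSpace ℂ X] [CompleteSpace X]
  {a b : ℝ} {A B : X →L[ℂ] X}

theorem norm_resolvent_le_mConst (hA : MemVab a b A) {t : ℝ} (ht : t ∈ Icc a b) :
    ‖resolvent A (t : ℂ)‖ ≤ mConst a b A :=
  le_csSup (isCompact_Icc.bddAbove_image
    (continuousOn_resolvent_comp Complex.continuous_ofReal hA).norm) (mem_image_of_mem _ ht)

theorem MemVab.add_smul (hA : MemVab a b A) {z : ℂ} (hz : ‖z‖ < 1 / mConst a b A / ‖B‖) :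
    MemVab a b (A + z • B) := by
  intro t ht
  -- Division by zero gives `0`, so a nonempty disk makes both denominators positive.
  have hrad : 0 < 1 / mConst a b A / ‖B‖ := (norm_nonneg z).trans_lt hz
  have hB : 0 < ‖B‖ := norm_pos_iff.mpr fun h ↦ by simp [h] at hrad
  have hm : 0 < mConst a b A := one_div_pos.mp ((div_pos_iff_of_pos_right hB).mp hrad)
  refine mem_resolventSet_add_of_norm_resolvent_mul_norm_lt_one (hA t ht) ?_
  calc ‖resolvent A (t : ℂ)‖ * ‖z • B‖
      ≤ mConst a b A * (‖z‖ * ‖B‖) := by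
        rw [norm_smul]
        gcongr
        exact norm_resolvent_le_mConst hA ht
    _ < 1 := by rwa [lt_div_iff₀ hB, lt_div_iff₀' hm] at hz

end Operators

/-- Formula (13): for `|z| < δ_A/‖B‖` the operator-valued function `z ↦ f(A + zB)` is
differentiable in operator norm, with derivative
`∫_a^b R(t,A+zB)·B·R(t,A+zB)·t dτ(t)`. -/
theorem fOp_hasDerivAt {X : Type*} [NormedAddCommGroup X] [NormedSpace ℂ X]
    [CompleteSpace X] (a b : ℝ) (hab : a < b) (τ : Measure ℝ) [IsFiniteMeasure τ]
    (A B : X →L[ℂ] X) (hA : MemVab a b A) (hB : B ≠ 0)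
    (z : ℂ) (hz : ‖z‖ < (1 / mConst a b A) / ‖B‖) :
    HasDerivAt (fun w : ℂ => fOp τ a b (A + w • B))
      (∫ t in Icc a b,
        t • (resolvent (A + z • B) (t : ℂ) * B * resolvent (A + z • B) (t : ℂ)) ∂τ) z :=
  fOp_hasDerivAt_general isCompact_Icc Complex.continuous_ofReal (hA.add_smul hz)
end

section
/- (Trace identity.) Let X be a finite-dimensional complex normed space and let A, B be linear operators on X such that [a,b] is contained in the resolvent set of A and in the resolvent set of B. Then tr(f(A) − f(B)) = ∫_a^b tr(R(t,A)·(A−B)·R(t,B))·t dτ(t), where tr denotes the trace of a linear operator on X. -/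
open MeasureTheory Set

/-!
Since `A R(t,A) = t R(t,A) - 1`, the second resolvent identity gives
`A R(t,A) - B R(t,B) = t R(t,A) (A - B) R(t,B)`. The resolvents are continuous on the compact
interval, so this identity can be integrated, and the trace, being a continuous functional in
finite dimension, commutes with the integral.
-/

section Algebra

variable {R 𝒜 : Type*} [CommRing R] [Ring 𝒜] [Algebra R 𝒜] {x y : 𝒜} {r : R}

theorem mul_resolvent_eq_smul_resolvent_sub_one_s16 (hx : r ∈ resolventSet R x) :
    x * resolvent x r = r • resolvent x r - 1 := by
  have h : (algebraMap R 𝒜 r - x) * resolvent x r = 1 := Ring.mul_inverse_cancel _ hx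
  rw [Algebra.smul_def, ← h, sub_mul, sub_sub_cancel]

theorem mul_resolvent_sub_mul_resolvent (hx : r ∈ resolventSet R x) (hy : r ∈ resolventSet R y) :
    x * resolvent x r - y * resolvent y r =
      r • (resolvent x r * (x - y) * resolvent y r) := by
  rw [mul_resolvent_eq_smul_resolvent_sub_one_s16 hx, mul_resolvent_eq_smul_resolvent_sub_one_s16 hy,
    sub_sub_sub_cancel_right, ← smul_sub, spectrum.resolvent_sub_resolvent hx hy]

end Algebra

section Integrability

variable {𝕜 𝒜 α : Type*} [NontriviallyNormedField 𝕜] [NormedRing 𝒜] [NormedAlgebra 𝕜 𝒜]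
  [CompleteSpace 𝒜] {x y : 𝒜}

theorem continuousOn_resolvent (x : 𝒜) : ContinuousOn (resolvent x) (resolventSet 𝕜 x) :=
  fun _ hk ↦ (spectrum.hasDerivAt_resolvent_const_left hk).continuousAt.continuousWithinAt

variable [TopologicalSpace α] [T2Space α] [MeasurableSpace α] [OpensMeasurableSpace α]
  {μ : Measure α} [IsFiniteMeasureOnCompacts μ] {K : Set α} {g : α → 𝕜}

theorem integrableOn_mul_resolvent (hK : IsCompact K) (hg : ContinuousOn g K)
    (hx : MapsTo g K (resolventSet 𝕜 x)) :
    IntegrableOn (fun t ↦ x * resolvent x (g t)) K μ :=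
  (continuousOn_const.mul ((continuousOn_resolvent x).comp hg hx)).integrableOn_compact' hK
    hK.measurableSet

theorem integrableOn_smul_resolvent_mul_sub_mul_resolvent (hK : IsCompact K)
    (hg : ContinuousOn g K) (hx : MapsTo g K (resolventSet 𝕜 x))
    (hy : MapsTo g K (resolventSet 𝕜 y)) :
    IntegrableOn (fun t ↦ g t • (resolvent x (g t) * (x - y) * resolvent y (g t))) K μ :=
  ((integrableOn_mul_resolvent hK hg hx).sub (integrableOn_mul_resolvent hK hg hy)).congr_fun
    (fun _ ht ↦ mul_resolvent_sub_mul_resolvent (hx ht) (hy ht)) hK.measurableSet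

end Integrability

theorem fOp_sub_fOp {X : Type*} [NormedAddCommGroup X] [NormedSpace ℂ X] [CompleteSpace X]
    {a b : ℝ} {τ : Measure ℝ} [IsFiniteMeasureOnCompacts τ] {A B : X →L[ℂ] X}
    (hA : ∀ t ∈ Icc a b, (t : ℂ) ∈ resolventSet ℂ A)
    (hB : ∀ t ∈ Icc a b, (t : ℂ) ∈ resolventSet ℂ B) :
    fOp τ a b A - fOp τ a b B =
      ∫ t in Icc a b, (t : ℂ) • (resolvent A (t : ℂ) * (A - B) * resolvent B (t : ℂ)) ∂τ := by
  have hint {C : X →L[ℂ] X} (hC : ∀ t ∈ Icc a b, (t : ℂ) ∈ resolventSet ℂ C) :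
      IntegrableOn (fun t : ℝ ↦ C * resolvent C (t : ℂ)) (Icc a b) τ :=
    integrableOn_mul_resolvent isCompact_Icc Complex.continuous_ofReal.continuousOn hC
  rw [fOp, fOp, ← integral_sub (hint hA) (hint hB)]
  exact setIntegral_congr_fun measurableSet_Icc fun t ht ↦
    mul_resolvent_sub_mul_resolvent (hA t ht) (hB t ht)

theorem trace_integral {X α : Type*} [NormedAddCommGroup X] [NormedSpace ℂ X]
    [FiniteDimensional ℂ X] [MeasurableSpace α] {μ : Measure α} {F : α → X →L[ℂ] X}
    (hF : Integrable F μ) :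
    LinearMap.trace ℂ X ((∫ t, F t ∂μ : X →L[ℂ] X) : X →ₗ[ℂ] X) =
      ∫ t, LinearMap.trace ℂ X (F t : X →ₗ[ℂ] X) ∂μ :=
  have : CompleteSpace X := FiniteDimensional.complete ℂ X
  let traceCLM : (X →L[ℂ] X) →L[ℂ] ℂ :=
    (LinearMap.trace ℂ X ∘ₗ ContinuousLinearMap.coeLM ℂ).toContinuousLinearMap
  (traceCLM.integral_comp_comm hF).symm

/-- Trace identity: on a finite-dimensional complex normed space, if `[a,b] ⊂ ρ(A) ∩ ρ(B)`,
then `tr(f(A) − f(B)) = ∫_a^b tr(R(t,A)·(A−B)·R(t,B))·t dτ(t)`. -/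
theorem trace_fOp_sub_fOp {X : Type*} [NormedAddCommGroup X] [NormedSpace ℂ X]
    [FiniteDimensional ℂ X] (a b : ℝ) (hab : a < b) (τ : Measure ℝ) [IsFiniteMeasure τ]
    (A B : X →L[ℂ] X)
    (hA : ∀ t ∈ Icc a b, (t : ℂ) ∈ resolventSet ℂ A)
    (hB : ∀ t ∈ Icc a b, (t : ℂ) ∈ resolventSet ℂ B) :
    LinearMap.trace ℂ X ((fOp τ a b A - fOp τ a b B) : X →ₗ[ℂ] X) =
      ∫ t in Icc a b,
        (t : ℂ) *
          LinearMap.trace ℂ X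
            ((resolvent A (t : ℂ) * (A - B) * resolvent B (t : ℂ)) : X →ₗ[ℂ] X) ∂τ := by
  have hint : IntegrableOn
      (fun t : ℝ ↦ (t : ℂ) • (resolvent A (t : ℂ) * (A - B) * resolvent B (t : ℂ)))
      (Icc a b) τ :=
    integrableOn_smul_resolvent_mul_sub_mul_resolvent isCompact_Icc
      Complex.continuous_ofReal.continuousOn hA hB
  rw [← ContinuousLinearMap.toLinearMap_sub, fOp_sub_fOp hA hB, trace_integral hint]
  simp only [ContinuousLinearMap.toLinearMap_smul, ContinuousLinearMap.toLinearMap_mul,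
    ContinuousLinearMap.toLinearMap_sub, map_smul, smul_eq_mul]
end
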